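/- Let β ∈ ℝ and let u be a twice continuously differentiable function on an open subset of {(t,x) ∈ ℝ² : 0 < |x| < t}. Then, writing r = |x|, s = √(t² − x²), and ∂̄₁u = (x/t) ∂_t u + ∂_x u, the following identity holds: □u = (t−r)^{−β} [ (s/t)² ∂_t + (2x/t) ∂̄₁ ] ( (t−r)^{β} ∂_t u ) + ((t−r)/t²) ( (t+r)/t − β ) ∂_t u − ∂̄₁ ∂̄₁ u. -/

import Mathlib

open MeasureTheory

/-- Partial derivative in `t` of a function `u(t,x)`. -/
noncomputable def Dt (u : ℝ → ℝ → ℝ) : ℝ → ℝ → ℝ := fun t x => deriv (fun τ => u τ x) t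

/-- Partial derivative in `x` of a function `u(t,x)`. -/
noncomputable def Dx (u : ℝ → ℝ → ℝ) : ℝ → ℝ → ℝ := fun t x => deriv (fun y => u t y) x

/-- The Lorentz boost `L u = x ∂_t u + t ∂_x u`. -/
noncomputable def Lop (u : ℝ → ℝ → ℝ) : ℝ → ℝ → ℝ := fun t x => x * Dt u t x + t * Dx u t x

/-- The 1+1-dimensional wave operator `□u = ∂_t∂_t u − ∂_x∂_x u`. -/
noncomputable def Box (u : ℝ → ℝ → ℝ) : ℝ → ℝ → ℝ := fun t x => Dt (Dt u) t x - Dx (Dx u) t x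

/-- The null derivative `∂̃₁ u = (x/|x|) ∂_t u + ∂_x u` (for `x ≠ 0`). -/
noncomputable def Nd (u : ℝ → ℝ → ℝ) : ℝ → ℝ → ℝ := fun t x => (x/|x|) * Dt u t x + Dx u t x

/-- The semi-hyperboloidal (hyperbolic) derivative `∂̄₁ u = (x/t) ∂_t u + ∂_x u`. -/
noncomputable def Db (u : ℝ → ℝ → ℝ) : ℝ → ℝ → ℝ := fun t x => (x/t) * Dt u t x + Dx u t x

/-!
The vector field `A = (s/t)²∂_t + (2x/t)∂̄₁` satisfies `□u = A(∂_t u) + (s²/t³) ∂_t u − ∂̄₁∂̄₁u`: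
the only first-order term comes from `∂̄₁(x/t) = s²/t³`. Conjugating the derivation `A` by `(t−r)^β`
adds `β A(t−r)/(t−r) = β (t−r)/t²`, because `A(t−r) = ((t−r)/t)²`. Since `s² = (t−r)(t+r)`, what
remains is `s²/t³ − β (t−r)/t² = ((t−r)/t²)((t+r)/t − β)`.
-/

open Function
open scoped Topology

section FirstOrder

variable {f : ℝ → ℝ → ℝ} {t x : ℝ}

lemma Dt_eq_fderiv (hf : DifferentiableAt ℝ (uncurry f) (t, x)) :
    Dt f t x = fderiv ℝ (uncurry f) (t, x) (1, 0) :=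
  (hf.hasFDerivAt.comp_hasDerivAt (f := fun τ => (τ, x)) t
    ((hasDerivAt_id t).prodMk (hasDerivAt_const t x))).deriv

lemma Dx_eq_fderiv (hf : DifferentiableAt ℝ (uncurry f) (t, x)) :
    Dx f t x = fderiv ℝ (uncurry f) (t, x) (0, 1) :=
  (hf.hasFDerivAt.comp_hasDerivAt (f := fun y => (t, y)) x
    ((hasDerivAt_const x t).prodMk (hasDerivAt_id x))).deriv

lemma mul_Dt_add_mul_Dx_eq_fderiv (hf : DifferentiableAt ℝ (uncurry f) (t, x)) (a b : ℝ) :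
    a * Dt f t x + b * Dx f t x = fderiv ℝ (uncurry f) (t, x) (a, b) := by
  have hab : ((a, b) : ℝ × ℝ) = a • (1, 0) + b • (0, 1) := by simp
  rw [Dt_eq_fderiv hf, Dx_eq_fderiv hf, hab, map_add, map_smul, map_smul, smul_eq_mul,
    smul_eq_mul]

lemma Db_eq_fderiv (hf : DifferentiableAt ℝ (uncurry f) (t, x)) :
    Db f t x = fderiv ℝ (uncurry f) (t, x) (x / t, 1) := by
  rw [← mul_Dt_add_mul_Dx_eq_fderiv hf, one_mul, Db]

lemma Db_add {g : ℝ → ℝ → ℝ} (hf : DifferentiableAt ℝ (uncurry f) (t, x))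
    (hg : DifferentiableAt ℝ (uncurry g) (t, x)) :
    Db (f + g) t x = Db f t x + Db g t x := by
  rw [Db_eq_fderiv hf, Db_eq_fderiv hg, Db_eq_fderiv (f := f + g) (hf.add hg)]
  exact DFunLike.congr_fun (fderiv_add hf hg) _

lemma Db_mul {g : ℝ → ℝ → ℝ} (hf : DifferentiableAt ℝ (uncurry f) (t, x))
    (hg : DifferentiableAt ℝ (uncurry g) (t, x)) :
    Db (f * g) t x = f t x * Db g t x + g t x * Db f t x := by
  rw [Db_eq_fderiv hf, Db_eq_fderiv hg, Db_eq_fderiv (f := f * g) (hf.mul hg)]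
  exact DFunLike.congr_fun (fderiv_mul hf hg) _

lemma differentiableAt_space_div_time (ht : t ≠ 0) :
    DifferentiableAt ℝ (uncurry fun t x : ℝ => x / t) (t, x) := by
  simp only [uncurry_def]
  fun_prop (disch := exact ht)

lemma Db_space_div_time (ht : t ≠ 0) : Db (fun t x => x / t) t x = (t ^ 2 - x ^ 2) / t ^ 3 := by
  have hDt : Dt (fun t x => x / t) t x = -x / t ^ 2 := by simp [Dt, div_eq_mul_inv]
  have hDx : Dx (fun t x => x / t) t x = 1 / t := by simp [Dx]
  rw [Db, hDt, hDx]
  field_simp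
  ring

/-- The vector field `(s/t)²∂_t + (2x/t)∂̄₁`, where `s² = t² − x²`. Applied to `∂_t u`, it gives the
second-order part of `□u + ∂̄₁∂̄₁u`. -/
noncomputable def hypField (f : ℝ → ℝ → ℝ) : ℝ → ℝ → ℝ := fun t x =>
  ((t ^ 2 - x ^ 2) / t ^ 2) * Dt f t x + (2 * x / t) * Db f t x

lemma hypField_eq_fderiv (hf : DifferentiableAt ℝ (uncurry f) (t, x)) :
    hypField f t x = fderiv ℝ (uncurry f) (t, x)
      ((t ^ 2 - x ^ 2) / t ^ 2 + 2 * x / t * (x / t), 2 * x / t) := by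
  rw [← mul_Dt_add_mul_Dx_eq_fderiv hf, hypField, Db]
  ring

lemma hypField_rpow_mul {w v : ℝ → ℝ → ℝ} (hw : DifferentiableAt ℝ (uncurry w) (t, x))
    (hv : DifferentiableAt ℝ (uncurry v) (t, x)) (hw₀ : w t x ≠ 0) (β : ℝ) :
    hypField (fun t x => w t x ^ β * v t x) t x =
      w t x ^ β * (hypField v t x + β * (hypField w t x / w t x) * v t x) := by
  have hwβ : HasFDerivAt (fun p : ℝ × ℝ => uncurry w p ^ β)
      ((β * w t x ^ (β - 1)) • fderiv ℝ (uncurry w) (t, x)) (t, x) :=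
    hw.hasFDerivAt.rpow_const (Or.inl hw₀)
  have hprod : HasFDerivAt (uncurry fun t x => w t x ^ β * v t x)
      (w t x ^ β • fderiv ℝ (uncurry v) (t, x) +
        v t x • (β * w t x ^ (β - 1)) • fderiv ℝ (uncurry w) (t, x)) (t, x) :=
    hwβ.mul hv.hasFDerivAt
  rw [hypField_eq_fderiv hprod.differentiableAt, hypField_eq_fderiv hw, hypField_eq_fderiv hv,
    hprod.fderiv, Real.rpow_sub_one hw₀]
  simp only [add_apply, smul_apply, smul_eq_mul]
  ring

lemma differentiableAt_sub_abs (hx : x ≠ 0) :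
    DifferentiableAt ℝ (uncurry fun t x : ℝ => t - |x|) (t, x) :=
  differentiableAt_fst.sub (differentiableAt_snd.abs hx)

lemma hypField_sub_abs (ht : t ≠ 0) (hx : x ≠ 0) :
    hypField (fun t x => t - |x|) t x = ((t - |x|) / t) ^ 2 := by
  have hDt : Dt (fun t x => t - |x|) t x = 1 := by simp [Dt]
  have hDx : Dx (fun t x => t - |x|) t x = -SignType.sign x :=
    ((hasDerivAt_abs hx).const_sub t).deriv
  have hsign : x * SignType.sign x = |x| := self_mul_sign x
  rw [hypField, Db, hDt, hDx]
  field_simp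
  linear_combination -2 * t * hsign - sq_abs x

end FirstOrder

section SecondOrder

lemma hasFDerivAt_fderiv_apply {𝕜 E F : Type*} [NontriviallyNormedField 𝕜]
    [NormedAddCommGroup E] [NormedSpace 𝕜 E] [NormedAddCommGroup F] [NormedSpace 𝕜 F]
    {f : E → F} {p : E} (hf : DifferentiableAt 𝕜 (fderiv 𝕜 f) p) (v : E) :
    HasFDerivAt (fun q => fderiv 𝕜 f q v) ((fderiv 𝕜 (fderiv 𝕜 f) p).flip v) p :=
  (ContinuousLinearMap.apply 𝕜 F v).hasFDerivAt.comp p hf.hasFDerivAt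

variable {u : ℝ → ℝ → ℝ} {t x : ℝ}

lemma hasFDerivAt_Dt (hu : ∀ᶠ q in 𝓝 (t, x), DifferentiableAt ℝ (uncurry u) q)
    (hu' : DifferentiableAt ℝ (fderiv ℝ (uncurry u)) (t, x)) :
    HasFDerivAt (uncurry (Dt u)) ((fderiv ℝ (fderiv ℝ (uncurry u)) (t, x)).flip (1, 0)) (t, x) :=
  (hasFDerivAt_fderiv_apply hu' (1, 0)).congr_of_eventuallyEq
    (hu.mono fun _ hq => Dt_eq_fderiv hq)

lemma hasFDerivAt_Dx (hu : ∀ᶠ q in 𝓝 (t, x), DifferentiableAt ℝ (uncurry u) q)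
    (hu' : DifferentiableAt ℝ (fderiv ℝ (uncurry u)) (t, x)) :
    HasFDerivAt (uncurry (Dx u)) ((fderiv ℝ (fderiv ℝ (uncurry u)) (t, x)).flip (0, 1)) (t, x) :=
  (hasFDerivAt_fderiv_apply hu' (0, 1)).congr_of_eventuallyEq
    (hu.mono fun _ hq => Dx_eq_fderiv hq)

lemma Dt_Dx_comm (hu : ∀ᶠ q in 𝓝 (t, x), DifferentiableAt ℝ (uncurry u) q)
    (hu' : DifferentiableAt ℝ (fderiv ℝ (uncurry u)) (t, x)) :
    Dt (Dx u) t x = Dx (Dt u) t x := by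
  have hDt := hasFDerivAt_Dt hu hu'
  have hDx := hasFDerivAt_Dx hu hu'
  rw [Dt_eq_fderiv hDx.differentiableAt, Dx_eq_fderiv hDt.differentiableAt, hDx.fderiv, hDt.fderiv]
  exact second_derivative_symmetric_of_eventually (hu.mono fun _ hq => hq.hasFDerivAt)
    hu'.hasFDerivAt _ _

lemma Db_Db (ht : t ≠ 0) (hDt : DifferentiableAt ℝ (uncurry (Dt u)) (t, x))
    (hDx : DifferentiableAt ℝ (uncurry (Dx u)) (t, x)) :
    Db (Db u) t x =
      x / t * Db (Dt u) t x + (t ^ 2 - x ^ 2) / t ^ 3 * Dt u t x + Db (Dx u) t x := by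
  have hdiv := differentiableAt_space_div_time (x := x) ht
  have hmul : DifferentiableAt ℝ (uncurry ((fun t x => x / t) * Dt u)) (t, x) := hdiv.mul hDt
  calc Db (Db u) t x
      = Db ((fun t x => x / t) * Dt u) t x + Db (Dx u) t x := Db_add hmul hDx
    _ = x / t * Db (Dt u) t x + (t ^ 2 - x ^ 2) / t ^ 3 * Dt u t x + Db (Dx u) t x := by
        rw [Db_mul hdiv hDt, Db_space_div_time ht, mul_comm (Dt u t x)]

lemma Box_eq_hypField (ht : t ≠ 0) (hu : ∀ᶠ q in 𝓝 (t, x), DifferentiableAt ℝ (uncurry u) q)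
    (hu' : DifferentiableAt ℝ (fderiv ℝ (uncurry u)) (t, x)) :
    Box u t x =
      hypField (Dt u) t x + (t ^ 2 - x ^ 2) / t ^ 3 * Dt u t x - Db (Db u) t x := by
  rw [Db_Db ht (hasFDerivAt_Dt hu hu').differentiableAt (hasFDerivAt_Dx hu hu').differentiableAt,
    Box, hypField, Db, Db, Dt_Dx_comm hu hu']
  field_simp
  ring

theorem stmt17_general (β : ℝ) (hx : x ≠ 0) (hxt : |x| < t)
    (hu : ∀ᶠ q in 𝓝 (t, x), DifferentiableAt ℝ (uncurry u) q)
    (hu' : DifferentiableAt ℝ (fderiv ℝ (uncurry u)) (t, x)) :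
    Box u t x =
      (t - |x|) ^ (-β) *
        (((t ^ 2 - x ^ 2) / t ^ 2) * Dt (fun t x => (t - |x|) ^ β * Dt u t x) t x
          + (2 * x / t) * Db (fun t x => (t - |x|) ^ β * Dt u t x) t x)
      + ((t - |x|) / t ^ 2) * ((t + |x|) / t - β) * Dt u t x
      - Db (Db u) t x := by
  have ht : t ≠ 0 := ((abs_nonneg x).trans_lt hxt).ne'
  have hw : 0 < t - |x| := sub_pos.2 hxt
  have hconj : (t - |x|) ^ (-β) * hypField (fun t x => (t - |x|) ^ β * Dt u t x) t x =
      hypField (Dt u) t x + β * ((t - |x|) / t ^ 2) * Dt u t x := by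
    rw [hypField_rpow_mul (differentiableAt_sub_abs hx) (hasFDerivAt_Dt hu hu').differentiableAt
      hw.ne', hypField_sub_abs ht hx, Real.rpow_neg hw.le,
      inv_mul_cancel_left₀ (Real.rpow_pos_of_pos hw β).ne']
    field_simp
  rw [← hypField, hconj, Box_eq_hypField ht hu hu', ← sq_abs x]
  field_simp
  ring

end SecondOrder

/-- for `u` twice continuously differentiable on an open subset of
`{0 < |x| < t}`, writing `r = |x|` and `s² = t² − x²`,
`□u = (t−r)^{−β}[(s/t)²∂_t + (2x/t)∂̄₁]((t−r)^β ∂_t u) + ((t−r)/t²)((t+r)/t − β)∂_t u − ∂̄₁∂̄₁u`. -/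
theorem stmt17 (β : ℝ) (u : ℝ → ℝ → ℝ) (U : Set (ℝ × ℝ)) (hU : IsOpen U)
    (hUsub : U ⊆ {p : ℝ × ℝ | 0 < |p.2| ∧ |p.2| < p.1})
    (hu : ContDiffOn ℝ 2 (fun p : ℝ × ℝ => u p.1 p.2) U) :
    ∀ p ∈ U, Box u p.1 p.2 =
      (p.1 - |p.2|) ^ (-β) *
        (((p.1^2 - p.2^2)/p.1^2) * Dt (fun t x => (t - |x|) ^ β * Dt u t x) p.1 p.2
          + (2*p.2/p.1) * Db (fun t x => (t - |x|) ^ β * Dt u t x) p.1 p.2)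
      + ((p.1 - |p.2|)/p.1^2) * ((p.1 + |p.2|)/p.1 - β) * Dt u p.1 p.2
      - Db (Db u) p.1 p.2 :=
  fun _ hp =>
    stmt17_general β (abs_pos.1 (hUsub hp).1) (hUsub hp).2
      ((hu.differentiableOn two_ne_zero).eventually_differentiableAt (hU.mem_nhds hp))
      (((hu.contDiffAt (hU.mem_nhds hp)).fderiv_right (m := 1) le_rfl).differentiableAt one_ne_zero)
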